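/- Fix integers k ≥ 1, b ≥ 2 and r ≥ 1. Let K_b be the k×k multiplication-carries matrix, and let K_0^r(j) = (K_b)^r(0,j) be the distribution of the carry after r steps started from carry 0. Then the total variation distance to the uniform distribution satisfies (1/2)·Σ_{j=0}^{k−1} |K_0^r(j) − 1/k| ≤ k/(2·b^r). -/

import Mathlib

/-- The multiplication-carries matrix as a `k × k` real matrix: `K_b(i,j)` is the
transition probability from carry `i` to carry `j` when multiplying a number with
uniform random base-`b` digits by `k`, i.e.
`K_b(i,j) = (1/b)·#{d ∈ {0,…,b−1} : ⌊(i + k·d)/b⌋ = j}`. -/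
noncomputable def KM (k b : ℕ) : Matrix (Fin k) (Fin k) ℝ :=
  Matrix.of fun i j =>
    (Nat.card {d : Fin b // ((i : ℕ) + k * (d : ℕ)) / b = (j : ℕ)} : ℝ) / b

/-!
A digit `d` acts on carries by the map `i ↦ ⌊(i + k * d) / b⌋`, and `K_b` is the average of the
matrices of these maps. Processing a digit in base `b` and then one in base `a` is the same as
processing a single digit in base `a * b`, so `K_b * K_a = K_{ab}` and `K_b ^ r = K_{b ^ r}`.
It remains to treat one step in base `B = b ^ r`. The digits leading from `i` to `j` correspond,
via `n = i + k * d`, to the integers `n ≡ i (mod k)` in the interval `[j * B, (j + 1) * B)`; their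
number differs from `B / k` by less than `1`, so each entry of `K_B` is within `1 / B` of `1 / k`.
-/

open Finset

theorem one_submatrix_mul_one_submatrix {l m n R : Type*} [Fintype m] [DecidableEq m]
    [DecidableEq n] [NonAssocSemiring R] (f : l → m) (g : m → n) :
    (1 : Matrix m m R).submatrix f id * (1 : Matrix n n R).submatrix g id =
      (1 : Matrix n n R).submatrix (g ∘ f) id :=
  Matrix.one_submatrix_mul f (Equiv.refl m) _

theorem abs_card_Ico_filter_modEq_sub_div_lt_one {k : ℕ} (hk : 0 < k) (a n v : ℕ) :
    |(#{x ∈ Ico a (a + n) | x ≡ v [MOD k]} : ℝ) - n / k| < 1 := by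
  set upper : ℚ := ((a + n : ℕ) - v) / k with upper_def
  set lower : ℚ := (a - v) / k with lower_def
  have lower_le_upper : lower ≤ upper := by
    rw [lower_def, upper_def]
    gcongr
    exact Nat.le_add_right a n
  have card_eq : (#{x ∈ Ico a (a + n) | x ≡ v [MOD k]} : ℤ) = ⌈upper⌉ - ⌈lower⌉ := by
    rw [Nat.Ico_filter_modEq_card a (a + n) hk v,
      max_eq_left (sub_nonneg.2 (Int.ceil_le_ceil lower_le_upper))]
  have upper_sub_lower : (n : ℚ) / k = upper - lower := by
    rw [upper_def, lower_def]
    push_cast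
    ring
  have abs_lt_rat : |(#{x ∈ Ico a (a + n) | x ≡ v [MOD k]} : ℚ) - n / k| < 1 := by
    rw [← Int.cast_natCast (#_), card_eq, upper_sub_lower, abs_lt, Int.cast_sub]
    constructor <;> linarith [Int.le_ceil upper, Int.ceil_lt_add_one upper, Int.le_ceil lower,
      Int.ceil_lt_add_one lower]
  simpa using (Rat.cast_lt (K := ℝ)).2 abs_lt_rat

/-- One step of long multiplication by `k` in base `b`: the carry that digit `d` produces from the
incoming carry `i`. -/
def carry (k b : ℕ) (d : Fin b) (i : Fin k) : Fin k :=
  ⟨(i + k * d) / b, Nat.div_lt_of_lt_mul <| calc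
    i + k * d < k * (d + 1) := by linarith [i.isLt]
    _ ≤ k * b := Nat.mul_le_mul_left k d.isLt
    _ = b * k := mul_comm k b⟩

/-- `finProdFinEquiv d` is the two-digit numeral with low digit `d.2` in base `b` and high digit
`d.1` in base `a`, and multiplication processes the low digit first. -/
theorem carry_finProdFinEquiv (k : ℕ) {a b : ℕ} (d : Fin a × Fin b) :
    carry k (a * b) (finProdFinEquiv d) = carry k a d.1 ∘ carry k b d.2 := by
  ext i
  calc (i + k * (d.2 + b * d.1)) / (a * b)
      = (i + k * d.2 + b * (k * d.1)) / b / a := by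
        rw [Nat.div_div_eq_div_mul, mul_comm b a]
        ring_nf
    _ = ((i + k * d.2) / b + k * d.1) / a := by rw [Nat.add_mul_div_left _ _ d.2.pos]

theorem carry_eq_iff {k b : ℕ} {d : Fin b} {i j : Fin k} :
    carry k b d i = j ↔ (i + k * d : ℕ) ∈ Ico (j * b : ℕ) (j * b + b) := by
  rw [Fin.ext_iff, carry, le_antisymm_iff, ← Nat.lt_succ_iff, Nat.div_lt_iff_lt_mul d.pos,
    Nat.le_div_iff_mul_le d.pos, mem_Ico, Nat.succ_mul, and_comm]

theorem card_filter_carry_eq {k : ℕ} (b : ℕ) (i j : Fin k) :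
    #{d | carry k b d i = j} = #{n ∈ Ico (j * b : ℕ) (j * b + b) | n ≡ i [MOD k]} := by
  refine card_bij (fun d _ => i + k * d) ?maps_to ?injective ?surjective
  case maps_to =>
    intro d hd
    rw [mem_filter_univ, carry_eq_iff] at hd
    exact mem_filter.2 ⟨hd, by simp [Nat.ModEq]⟩
  case injective =>
    intro d _ e _ hde
    simpa [i.pos.ne', Fin.ext_iff] using hde
  case surjective =>
    intro n hn
    obtain ⟨n_mem, n_modEq⟩ := mem_filter.1 hn
    have n_eq : i + k * (n / k) = n := by
      rw [← Nat.mod_eq_of_modEq n_modEq i.isLt, Nat.mod_add_div]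
    have quotient_lt : n / k < b := Nat.div_lt_of_lt_mul <| calc
      n < (j + 1) * b := by linarith [(mem_Ico.1 n_mem).2]
      _ ≤ k * b := Nat.mul_le_mul_right b j.isLt
    exact ⟨⟨n / k, quotient_lt⟩, by rwa [mem_filter_univ, carry_eq_iff, n_eq], n_eq⟩

theorem KM_apply (k b : ℕ) (i j : Fin k) : KM k b i j = #{d | carry k b d i = j} / (b : ℝ) := by
  simp [KM, carry, Fin.ext_iff, Fintype.card_subtype]

theorem KM_eq_smul_sum_carry (k b : ℕ) :
    KM k b = (b : ℝ)⁻¹ • ∑ d, (1 : Matrix (Fin k) (Fin k) ℝ).submatrix (carry k b d) id := by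
  ext i j
  simp [KM_apply, Matrix.sum_apply, Matrix.one_apply, div_eq_inv_mul]

theorem KM_one (k : ℕ) : KM k 1 = 1 := by
  have carry_one : carry k 1 0 = id := by ext; simp [carry]
  simp [KM_eq_smul_sum_carry, carry_one]

theorem KM_mul (k a b : ℕ) : KM k (a * b) = KM k b * KM k a := by
  simp only [KM_eq_smul_sum_carry, ← finProdFinEquiv.sum_comp, carry_finProdFinEquiv,
    Fintype.sum_prod_type_right, smul_mul_smul_comm, sum_mul_sum,
    one_submatrix_mul_one_submatrix, Nat.cast_mul, mul_inv_rev]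

theorem KM_pow (k b r : ℕ) : KM k (b ^ r) = KM k b ^ r := by
  induction r with
  | zero => rw [pow_zero, pow_zero, KM_one]
  | succ r ih => rw [pow_succ, KM_mul, ih, pow_succ']

theorem abs_KM_sub_one_div_lt {k b : ℕ} (hb : 0 < b) (i j : Fin k) :
    |KM k b i j - 1 / k| < 1 / b := by
  have hb' : (0 : ℝ) < b := Nat.cast_pos.2 hb
  have KM_sub : KM k b i j - 1 / k =
      (#{n ∈ Ico (j * b : ℕ) (j * b + b) | n ≡ i [MOD k]} - b / k) / (b : ℝ) := by
    rw [KM_apply, card_filter_carry_eq]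
    field_simp
  rw [KM_sub, abs_div, abs_of_pos hb']
  gcongr
  exact abs_card_Ico_filter_modEq_sub_div_lt_one i.pos (j * b) b i

theorem Kmat_total_variation_bound_general {k b : ℕ} (hb : 0 < b) (r : ℕ) (i : Fin k) :
    (1 / 2) * ∑ j : Fin k, |(KM k b ^ r) i j - 1 / (k : ℝ)| ≤ (k : ℝ) / (2 * (b : ℝ) ^ r) := by
  calc (1 / 2) * ∑ j : Fin k, |(KM k b ^ r) i j - 1 / (k : ℝ)|
      = (1 / 2) * ∑ j : Fin k, |KM k (b ^ r) i j - 1 / (k : ℝ)| := by rw [KM_pow]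
    _ ≤ (1 / 2) * ∑ _j : Fin k, 1 / ((b ^ r : ℕ) : ℝ) := by
        gcongr with j
        exact (abs_KM_sub_one_div_lt (Nat.pow_pos hb) i j).le
    _ = (k : ℝ) / (2 * (b : ℝ) ^ r) := by
        rw [sum_const, card_univ, Fintype.card_fin, nsmul_eq_mul, Nat.cast_pow]
        ring

/-- **Proposition 8 of Diaconis–Fulman**: the total variation distance of the carries
chain for base-`b` multiplication by `k`, started at `0`, from the uniform distribution
after `r` steps is at most `k/(2·b^r)`. -/
theorem Kmat_total_variation_bound (k b : ℕ) (hk : 1 ≤ k) (hb : 2 ≤ b) (r : ℕ) (hr : 1 ≤ r) :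
    (1 / 2) * ∑ j : Fin k, |(KM k b ^ r) ⟨0, hk⟩ j - 1 / (k : ℝ)| ≤
      (k : ℝ) / (2 * (b : ℝ) ^ r) :=
  Kmat_total_variation_bound_general (by lia) r ⟨0, hk⟩
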